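/- arXiv:2203.00711 — 2 statements merged into one kernel-verified Lean document; each statement's English description precedes it below -/
import Mathlib

section
/- Assume α ≥ 1, λ is nondecreasing on [t₀,∞), b(t) > β'(t) + β(t)/t (equivalently w(t) > 0) for every t ≥ t₀, and (α−3)·w(t) − t·w'(t) ≥ 0 for every t ≥ t₀. Then for every z ∈ argmin Φ and every t ≥ t₀, Φ_{λ(t)}(x(t)) − Φ* ≤ E(t₀)/(t²·w(t)), where E(t₀) = t₀²·w(t₀)·(Φ_{λ(t₀)}(x(t₀)) − Φ*) + (1/2)·‖(α−1)·(x(t₀)−z) + t₀·ẋ(t₀) + t₀·β(t₀)·∇Φ_{λ(t₀)}(x(t₀))‖². -/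
open Set MeasureTheory Filter Real

noncomputable section

/-- Convexity for extended-real-valued functions. -/
def EConvexOn {H : Type*} [NormedAddCommGroup H] [NormedSpace ℝ H] (f : H → EReal) : Prop :=
  ∀ x y : H, ∀ a c : ℝ, 0 ≤ a → 0 ≤ c → a + c = 1 →
    f (a • x + c • y) ≤ (a : EReal) * f x + (c : EReal) * f y

/-- `p` is the proximal point of `f` with parameter `l` at `x`, i.e. the (unique) minimizer of
`y ↦ f y + ‖x - y‖² / (2l)`. -/
def IsProxPt {H : Type*} [NormedAddCommGroup H] [InnerProductSpace ℝ H]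
    (f : H → EReal) (l : ℝ) (x p : H) : Prop :=
  ∀ y : H, f p + ((‖x - p‖ ^ 2 / (2 * l) : ℝ) : EReal)
      ≤ f y + ((‖x - y‖ ^ 2 / (2 * l) : ℝ) : EReal)

/-- The Moreau envelope of `f` with parameter `l` (as a real number). -/
def moreau {H : Type*} [NormedAddCommGroup H] [InnerProductSpace ℝ H]
    (f : H → EReal) (l : ℝ) (x : H) : ℝ :=
  (⨅ y : H, f y + ((‖x - y‖ ^ 2 / (2 * l) : ℝ) : EReal)).toReal

/-!
The Moreau envelope is jointly convex: as a function of `(l, x)`, `moreau Φ l x` has the subgradient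
`(-‖g‖² / 2, g)`, where `g = (x - prox x) / l`. Along the trajectory this subgradient is continuous,
so the envelope is differentiable in time with derivative `⟪g, ẋ⟫ - λ̇ ‖g‖² / 2 ≤ ⟪g, ẋ⟫`. By the
differential equation the vector `u = (α - 1) (x - z) + t ẋ + t β g` has derivative `-t w g`, and
the subgradient inequality at `z` bounds the gap `φ = moreau Φ λ x - Φ z` by `⟪g, x - z⟫`. Hence
the energy `t² w φ + ‖u‖² / 2` has derivative at most `-t ((α - 3) w - t ẇ) φ ≤ 0`, and its value at
`t₀` bounds `t² w φ`.
-/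

/-- The gradient at `x` of the Moreau envelope with parameter `l`, expressed through the proximal
point `p` of `x`. -/
def moreauGrad {H : Type*} [AddCommGroup H] [Module ℝ H] (l : ℝ) (x p : H) : H :=
  l⁻¹ • (x - p)

lemma smul_moreauGrad {H : Type*} [AddCommGroup H] [Module ℝ H] {l : ℝ} (hl : l ≠ 0) (x p : H) :
    l • moreauGrad l x p = x - p :=
  smul_inv_smul₀ hl _

lemma norm_sub_sq_div_eq_norm_moreauGrad_sq {H : Type*} [SeminormedAddCommGroup H]
    [NormedSpace ℝ H] {l : ℝ} (hl : l ≠ 0) (x p : H) :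
    ‖x - p‖ ^ 2 / (2 * l) = l / 2 * ‖moreauGrad l x p‖ ^ 2 := by
  rw [← smul_moreauGrad hl, norm_smul, mul_pow, Real.norm_eq_abs, sq_abs]
  field_simp

section MoreauEnvelope

variable {H : Type*} [NormedAddCommGroup H] [InnerProductSpace ℝ H]
  {Φ : H → EReal} {l m : ℝ} {x y z p q : H}

namespace IsProxPt

lemma ne_top (hp : IsProxPt Φ l x p) (hproper : ∃ y, Φ y ≠ ⊤) : Φ p ≠ ⊤ := by
  obtain ⟨y, hy⟩ := hproper
  intro htop
  have hle := hp y
  rw [htop, EReal.top_add_coe, top_le_iff] at hle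
  exact EReal.add_ne_top hy (EReal.coe_ne_top _) hle

lemma moreau_eq (hp : IsProxPt Φ l x p) (hl : l ≠ 0) (hbot : ∀ y, Φ y ≠ ⊥)
    (hproper : ∃ y, Φ y ≠ ⊤) :
    moreau Φ l x = (Φ p).toReal + l / 2 * ‖moreauGrad l x p‖ ^ 2 := by
  have hinf : ⨅ y : H, Φ y + ((‖x - y‖ ^ 2 / (2 * l) : ℝ) : EReal)
      = Φ p + ((‖x - p‖ ^ 2 / (2 * l) : ℝ) : EReal) :=
    le_antisymm (iInf_le _ p) (le_iInf hp)
  rw [moreau, hinf, EReal.toReal_add (hp.ne_top hproper) (hbot p) (EReal.coe_ne_top _)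
    (EReal.coe_ne_bot _), EReal.toReal_coe, norm_sub_sq_div_eq_norm_moreauGrad_sq hl]

lemma toReal_le_moreau (hp : IsProxPt Φ l x p) (hl : 0 < l) (hbot : ∀ y, Φ y ≠ ⊥)
    (hproper : ∃ y, Φ y ≠ ⊤) (hz : ∀ y, Φ z ≤ Φ y) : (Φ z).toReal ≤ moreau Φ l x := by
  rw [hp.moreau_eq hl.ne' hbot hproper]
  have hzp : (Φ z).toReal ≤ (Φ p).toReal :=
    EReal.toReal_le_toReal (hz p) (hbot z) (hp.ne_top hproper)
  have hsq : 0 ≤ l / 2 * ‖moreauGrad l x p‖ ^ 2 := by positivity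
  linarith

lemma toReal_add_inner_sub_le_mul (hp : IsProxPt Φ l x p) (hl : l ≠ 0) (hconv : EConvexOn Φ)
    (hbot : ∀ y, Φ y ≠ ⊥) (hy : Φ y ≠ ⊤) {a : ℝ} (ha : 0 < a) (ha' : a ≤ 1) :
    (Φ p).toReal + inner ℝ (moreauGrad l x p) (y - p) - (Φ y).toReal
      ≤ a * (‖y - p‖ ^ 2 / (2 * l)) := by
  have hsegment := (hp ((1 - a) • p + a • y)).trans
    (add_le_add_left (hconv p y (1 - a) a (by linarith) ha.le (by ring)) _)
  lift Φ p to ℝ using ⟨hp.ne_top ⟨y, hy⟩, hbot p⟩ with fp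
  lift Φ y to ℝ using ⟨hy, hbot y⟩ with fy
  have hreal : fp + ‖x - p‖ ^ 2 / (2 * l)
      ≤ (1 - a) * fp + a * fy + ‖x - ((1 - a) • p + a • y)‖ ^ 2 / (2 * l) := by
    exact_mod_cast hsegment
  have hexpand : ‖x - ((1 - a) • p + a • y)‖ ^ 2 / (2 * l) = ‖x - p‖ ^ 2 / (2 * l)
      - a * inner ℝ (moreauGrad l x p) (y - p) + a * (a * (‖y - p‖ ^ 2 / (2 * l))) := by
    have hdiff : x - ((1 - a) • p + a • y) = (x - p) - a • (y - p) := by module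
    rw [hdiff, norm_sub_sq_real, inner_smul_right, norm_smul, mul_pow, Real.norm_eq_abs, sq_abs,
      moreauGrad, real_inner_smul_left]
    field_simp
  simp only [EReal.toReal_coe]
  refine le_of_mul_le_mul_left ?_ ha
  linarith

lemma toReal_add_inner_le (hp : IsProxPt Φ l x p) (hl : l ≠ 0) (hconv : EConvexOn Φ)
    (hbot : ∀ y, Φ y ≠ ⊥) (hy : Φ y ≠ ⊤) :
    (Φ p).toReal + inner ℝ (moreauGrad l x p) (y - p) ≤ (Φ y).toReal := by
  have hlim : Tendsto (fun a : ℝ ↦ a * (‖y - p‖ ^ 2 / (2 * l))) (nhdsWithin 0 (Ioi 0))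
      (nhds 0) := by
    refine tendsto_nhdsWithin_of_tendsto_nhds ?_
    exact (by fun_prop : Continuous _).tendsto' 0 0 (zero_mul _)
  refine sub_nonpos.1 (ge_of_tendsto hlim ?_)
  filter_upwards [Ioc_mem_nhdsGT one_pos] with a ha
  exact hp.toReal_add_inner_sub_le_mul hl hconv hbot hy ha.1 ha.2

lemma moreau_add_inner_add_le (hp : IsProxPt Φ l x p) (hl : l ≠ 0) (hconv : EConvexOn Φ)
    (hbot : ∀ y, Φ y ≠ ⊥) (hy : Φ y ≠ ⊤) :
    moreau Φ l x + inner ℝ (moreauGrad l x p) (y - x) + l / 2 * ‖moreauGrad l x p‖ ^ 2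
      ≤ (Φ y).toReal := by
  have hsub := hp.toReal_add_inner_le hl hconv hbot hy
  have hyp : y - p = (y - x) + l • moreauGrad l x p := by rw [smul_moreauGrad hl]; abel
  rw [hyp, inner_add_right, real_inner_smul_right, real_inner_self_eq_norm_sq] at hsub
  rw [hp.moreau_eq hl hbot ⟨y, hy⟩]
  linarith

lemma moreau_sub_toReal_le_inner (hp : IsProxPt Φ l x p) (hl : 0 < l) (hconv : EConvexOn Φ)
    (hbot : ∀ y, Φ y ≠ ⊥) (hy : Φ y ≠ ⊤) :
    moreau Φ l x - (Φ y).toReal ≤ inner ℝ (moreauGrad l x p) (x - y) := by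
  have hsub := hp.moreau_add_inner_add_le hl.ne' hconv hbot hy
  have hsq : 0 ≤ l / 2 * ‖moreauGrad l x p‖ ^ 2 := by positivity
  rw [← neg_sub x y, inner_neg_right] at hsub
  linarith

-- The defect in this joint subgradient inequality is `m / 2 * ‖g - h‖²`, `g` and `h` being the
-- gradients at `x` and `y`.
lemma moreau_add_inner_sub_le_moreau (hp : IsProxPt Φ l x p) (hq : IsProxPt Φ m y q)
    (hl : l ≠ 0) (hm : 0 < m) (hconv : EConvexOn Φ) (hbot : ∀ y, Φ y ≠ ⊥)
    (hproper : ∃ y, Φ y ≠ ⊤) :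
    moreau Φ l x + (inner ℝ (moreauGrad l x p) (y - x)
      - ‖moreauGrad l x p‖ ^ 2 / 2 * (m - l)) ≤ moreau Φ m y := by
  have hsub := hp.moreau_add_inner_add_le hl hconv hbot (hq.ne_top hproper)
  have hqx : q - x = (y - x) - m • moreauGrad m y q := by rw [smul_moreauGrad hm.ne']; abel
  rw [hqx, inner_sub_right, real_inner_smul_right] at hsub
  rw [hq.moreau_eq hm.ne' hbot hproper]
  have hsq : 0 ≤ m / 2 * ‖moreauGrad l x p - moreauGrad m y q‖ ^ 2 := by positivity
  rw [norm_sub_sq_real] at hsq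
  linarith

end IsProxPt

end MoreauEnvelope

lemma hasDerivWithinAt_of_subgradient {E : Type*} [NormedAddCommGroup E] [NormedSpace ℝ E]
    {S : Set ℝ} {φ : ℝ → ℝ} {ξ : ℝ → E →L[ℝ] ℝ} {y : ℝ → E} {y' : E} {t : ℝ} (ht : t ∈ S)
    (hsub : ∀ r ∈ S, ∀ s ∈ S, φ r + ξ r (y s - y r) ≤ φ s)
    (hξ : ContinuousWithinAt ξ S t) (hy : HasDerivWithinAt y y' S t) :
    HasDerivWithinAt φ (ξ t y') S t := by
  have hlinear : (fun s ↦ ξ t (y s - y t - (s - t) • y')) =o[nhdsWithin t S] (· - t) :=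
    ((ξ t).isBigO_comp _ _).trans_isLittleO (hasDerivWithinAt_iff_isLittleO.1 hy)
  have hgap : (fun s ↦ (ξ s - ξ t) (y s - y t)) =o[nhdsWithin t S] (· - t) := by
    have hξ0 : (fun s ↦ ‖ξ s - ξ t‖) =o[nhdsWithin t S] (fun _ ↦ (1 : ℝ)) :=
      ((Asymptotics.isLittleO_one_iff ℝ).2 (tendsto_sub_nhds_zero_iff.2 hξ)).norm_left
    have hprod := hξ0.mul_isBigO hy.hasFDerivWithinAt.isBigO_sub.norm_norm
    refine Asymptotics.IsBigO.trans_isLittleO (.of_norm_le fun s ↦ ?_) (by simpa using hprod)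
    exact (ξ s - ξ t).le_opNorm _
  -- The error beyond the linear part of `ξ t ∘ y` lies between `0` and `(ξ s - ξ t) (y s - y t)`.
  have hbetween : (fun s ↦ φ s - φ t - ξ t (y s - y t)) =o[nhdsWithin t S] (· - t) := by
    refine Asymptotics.IsBigO.trans_isLittleO (.of_bound 1 ?_) hgap
    filter_upwards [self_mem_nhdsWithin] with s hs
    have hlower := hsub t ht s hs
    have hupper := hsub s hs t ht
    rw [← neg_sub (y s) (y t), map_neg] at hupper
    rw [one_mul, Real.norm_of_nonneg (by linarith), sub_apply]
    exact le_trans (by linarith) (Real.le_norm_self _)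
  refine hasDerivWithinAt_iff_isLittleO.2 ((hbetween.add hlinear).congr_left fun s ↦ ?_)
  simp only [map_sub, map_smul]
  ring

lemma hasDerivWithinAt_moreau {H : Type*} [NormedAddCommGroup H] [InnerProductSpace ℝ H]
    {Φ : H → EReal} {S : Set ℝ} {lam : ℝ → ℝ} {x p : ℝ → H} {t lam' : ℝ} {x' : H} (ht : t ∈ S)
    (hbot : ∀ y, Φ y ≠ ⊥) (hproper : ∃ y, Φ y ≠ ⊤) (hconv : EConvexOn Φ)
    (hlampos : ∀ s ∈ S, 0 < lam s) (hp : ∀ s ∈ S, IsProxPt Φ (lam s) (x s) (p s))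
    (hlam : HasDerivWithinAt lam lam' S t) (hx : HasDerivWithinAt x x' S t)
    (hgrad : ContinuousWithinAt (fun s ↦ moreauGrad (lam s) (x s) (p s)) S t) :
    HasDerivWithinAt (fun s ↦ moreau Φ (lam s) (x s))
      (inner ℝ (moreauGrad (lam t) (x t) (p t)) x'
        - ‖moreauGrad (lam t) (x t) (p t)‖ ^ 2 / 2 * lam') S t := by
  let ξ : H → H × ℝ →L[ℝ] ℝ := fun g ↦
    (innerSL ℝ g).comp (.fst ℝ H ℝ) - (‖g‖ ^ 2 / 2) • .snd ℝ H ℝ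
  have hξ : Continuous ξ := by fun_prop
  refine hasDerivWithinAt_of_subgradient (ξ := fun s ↦ ξ (moreauGrad (lam s) (x s) (p s)))
    (y := fun s ↦ (x s, lam s)) ht (fun r hr s hs ↦ ?_)
    (hξ.continuousAt.comp_continuousWithinAt hgrad) (hx.prodMk hlam)
  exact (hp r hr).moreau_add_inner_sub_le_moreau (hp s hs) (hlampos r hr).ne' (hlampos s hs)
    hconv hbot hproper

/-- The vector `(α - 1) (x - z) + t ẋ + t β g` of the Lyapunov analysis of the damped system, with
`v` in the role of the velocity `ẋ` and `g` in that of the gradient along the trajectory. -/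
def anchor {H : Type*} [AddCommGroup H] [Module ℝ H] (α : ℝ) (z : H) (β : ℝ → ℝ)
    (x v g : ℝ → H) (t : ℝ) : H :=
  (α - 1) • (x t - z) + t • v t + (t * β t) • g t

/-- The Lyapunov energy `t² w φ + ‖u‖² / 2` of a value gap `φ` weighted by `w`; below `u` is the
`anchor` of a trajectory. -/
def energy {H : Type*} [Norm H] (w φ : ℝ → ℝ) (u : ℝ → H) (t : ℝ) : ℝ :=
  t ^ 2 * w t * φ t + 1 / 2 * ‖u t‖ ^ 2

lemma hasDerivWithinAt_anchor {H : Type*} [NormedAddCommGroup H] [NormedSpace ℝ H]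
    {S : Set ℝ} {α t b β' : ℝ} {β : ℝ → ℝ} {x v g : ℝ → H} {acc g' : H}
    (z : H) (ht : t ≠ 0) (hβ : HasDerivWithinAt β β' S t)
    (hx : HasDerivWithinAt x (v t) S t) (hv : HasDerivWithinAt v acc S t)
    (hg : HasDerivWithinAt g g' S t)
    (hode : acc + (α / t) • v t + β t • g' + b • g t = 0) :
    HasDerivWithinAt (anchor α z β x v g) (-(t * (b - β' - β t / t)) • g t) S t := by
  have hanchor := (((hx.sub_const z).const_smul (α - 1)).add
    ((hasDerivWithinAt_id t S).smul hv)).add (((hasDerivWithinAt_id t S).mul hβ).smul hg)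
  refine hanchor.congr_deriv ?_
  have hacc : acc = -((α / t) • v t + β t • g' + b • g t) := by
    rw [eq_neg_iff_add_eq_zero, ← hode]
    abel
  simp only [Pi.mul_apply, id, hacc]
  match_scalars <;> field_simp <;> ring

lemma le_energy_div_of_antitoneOn {H : Type*} [SeminormedAddGroup H]
    {w φ : ℝ → ℝ} {u : ℝ → H} {t₀ t : ℝ}
    (hanti : AntitoneOn (energy w φ u) (Ici t₀)) (ht : t₀ ≤ t) (hpos : 0 < t ^ 2 * w t) :
    φ t ≤ energy w φ u t₀ / (t ^ 2 * w t) := by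
  rw [le_div_iff₀' hpos]
  calc t ^ 2 * w t * φ t ≤ energy w φ u t := le_add_of_nonneg_right (by positivity)
    _ ≤ energy w φ u t₀ := hanti self_mem_Ici ht ht

section Lyapunov

variable {H : Type*} [NormedAddCommGroup H] [InnerProductSpace ℝ H]

lemma hasDerivWithinAt_energy {S : Set ℝ} {w φ : ℝ → ℝ} {u : ℝ → H} {t w' φ' : ℝ} {u' : H}
    (hw : HasDerivWithinAt w w' S t) (hφ : HasDerivWithinAt φ φ' S t)
    (hu : HasDerivWithinAt u u' S t) :
    HasDerivWithinAt (energy w φ u)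
      ((2 * t * w t + t ^ 2 * w') * φ t + t ^ 2 * w t * φ' + inner ℝ (u t) u') S t := by
  have henergy := (((hasDerivAt_pow 2 t).hasDerivWithinAt.mul hw).mul hφ).add
    (hu.norm_sq.const_mul (1 / 2))
  refine henergy.congr_deriv ?_
  simp only [Pi.mul_apply]
  push_cast
  ring

lemma energy_deriv_nonpos {α t w w' φ φ' : ℝ} {z : H} {β : ℝ → ℝ} {x v g : ℝ → H}
    (ht : 0 ≤ t) (hα : 1 ≤ α) (hβ : 0 ≤ β t) (hw : 0 ≤ w) (hw' : 0 ≤ (α - 3) * w - t * w')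
    (hφ : 0 ≤ φ) (hφinner : φ ≤ inner ℝ (g t) (x t - z)) (hφ' : φ' ≤ inner ℝ (g t) (v t)) :
    (2 * t * w + t ^ 2 * w') * φ + t ^ 2 * w * φ'
      + inner ℝ (anchor α z β x v g t) (-(t * w) • g t) ≤ 0 := by
  have hinner : inner ℝ (anchor α z β x v g t) (g t) = (α - 1) * inner ℝ (g t) (x t - z)
      + t * inner ℝ (g t) (v t) + t * β t * ‖g t‖ ^ 2 := by
    rw [real_inner_comm, anchor, inner_add_right, inner_add_right, real_inner_smul_right,
      real_inner_smul_right, real_inner_smul_right, real_inner_self_eq_norm_sq]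
  have hgap : 0 ≤ t * w * ((α - 1) * (inner ℝ (g t) (x t - z) - φ)) :=
    mul_nonneg (mul_nonneg ht hw) (mul_nonneg (sub_nonneg.2 hα) (sub_nonneg.2 hφinner))
  have hvelocity : 0 ≤ t ^ 2 * w * (inner ℝ (g t) (v t) - φ') :=
    mul_nonneg (by positivity) (sub_nonneg.2 hφ')
  have hdamping : 0 ≤ t ^ 2 * w * (β t * ‖g t‖ ^ 2) := by positivity
  have hweight : 0 ≤ t * ((α - 3) * w - t * w') * φ := mul_nonneg (mul_nonneg ht hw') hφ
  rw [real_inner_smul_right, hinner]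
  linarith

lemma antitoneOn_energy_anchor {t₀ α : ℝ} (ht₀ : 0 ≤ t₀) (hα : 1 ≤ α) {z : H}
    {β w w' φ φ' : ℝ → ℝ} {x v g : ℝ → H}
    (hβ : ∀ t ≥ t₀, 0 ≤ β t) (hw : ∀ t ≥ t₀, 0 ≤ w t)
    (hw' : ∀ t ≥ t₀, HasDerivWithinAt w (w' t) (Ici t₀) t)
    (hgrowth : ∀ t ≥ t₀, 0 ≤ (α - 3) * w t - t * w' t)
    (hanchor : ∀ t ≥ t₀,
      HasDerivWithinAt (anchor α z β x v g) (-(t * w t) • g t) (Ici t₀) t)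
    (hφ : ∀ t ≥ t₀, 0 ≤ φ t) (hφinner : ∀ t ≥ t₀, φ t ≤ inner ℝ (g t) (x t - z))
    (hφ' : ∀ t ≥ t₀, HasDerivWithinAt φ (φ' t) (Ici t₀) t)
    (hφ'le : ∀ t ≥ t₀, φ' t ≤ inner ℝ (g t) (v t)) :
    AntitoneOn (energy w φ (anchor α z β x v g)) (Ici t₀) := by
  have henergy : ∀ t ∈ Ici t₀, HasDerivWithinAt (energy w φ (anchor α z β x v g)) _ (Ici t₀) t :=
    fun t ht ↦ hasDerivWithinAt_energy (hw' t ht) (hφ' t ht) (hanchor t ht)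
  refine antitoneOn_of_hasDerivWithinAt_nonpos (convex_Ici t₀)
    (fun t ht ↦ (henergy t ht).continuousWithinAt)
    (fun t ht ↦ (henergy t (interior_subset ht)).mono interior_subset) (fun t ht ↦ ?_)
  replace ht : t₀ ≤ t := interior_subset ht
  exact energy_deriv_nonpos (ht₀.trans ht) hα (hβ t ht) (hw t ht) (hgrowth t ht) (hφ t ht)
    (hφinner t ht) (hφ'le t ht)

end Lyapunov

theorem moreau_value_rate_general
    {H : Type*} [NormedAddCommGroup H] [InnerProductSpace ℝ H]
    {Φ : H → EReal} (hΦbot : ∀ y, Φ y ≠ ⊥) (hΦproper : ∃ y, Φ y ≠ ⊤) (hΦconv : EConvexOn Φ)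
    {t₀ α : ℝ} (ht₀ : 0 < t₀) {β b lam β' lam' w' : ℝ → ℝ}
    (hβnonneg : ∀ t ≥ t₀, 0 ≤ β t) (hlampos : ∀ t ≥ t₀, 0 < lam t)
    (hβ' : ∀ t ≥ t₀, HasDerivWithinAt β (β' t) (Ici t₀) t)
    (hlam' : ∀ t ≥ t₀, HasDerivWithinAt lam (lam' t) (Ici t₀) t)
    (hw' : ∀ t ≥ t₀, HasDerivWithinAt (fun s ↦ b s - β' s - β s / s) (w' t) (Ici t₀) t)
    {x v acc p G' : ℝ → H}
    (hx : ∀ t ≥ t₀, HasDerivWithinAt x (v t) (Ici t₀) t)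
    (hv : ∀ t ≥ t₀, HasDerivWithinAt v (acc t) (Ici t₀) t)
    (hp : ∀ t ≥ t₀, IsProxPt Φ (lam t) (x t) (p t))
    (hG' : ∀ t ≥ t₀,
      HasDerivWithinAt (fun s ↦ moreauGrad (lam s) (x s) (p s)) (G' t) (Ici t₀) t)
    (hode : ∀ t ≥ t₀, acc t + (α / t) • v t + β t • G' t
      + b t • moreauGrad (lam t) (x t) (p t) = 0)
    (hα : 1 ≤ α) (hlammono : MonotoneOn lam (Ici t₀))
    (hw : ∀ t ≥ t₀, β' t + β t / t < b t)
    (hgrowth : ∀ t ≥ t₀, 0 ≤ (α - 3) * (b t - β' t - β t / t) - t * w' t)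
    {z : H} (hz : ∀ y, Φ z ≤ Φ y) {t : ℝ} (ht : t₀ ≤ t) :
    moreau Φ (lam t) (x t) - (Φ z).toReal ≤
      energy (fun s ↦ b s - β' s - β s / s) (fun s ↦ moreau Φ (lam s) (x s) - (Φ z).toReal)
        (anchor α z β x v fun s ↦ moreauGrad (lam s) (x s) (p s)) t₀
        / (t ^ 2 * (b t - β' t - β t / t)) := by
  have hwpos : ∀ s ≥ t₀, 0 < b s - β' s - β s / s := fun s hs ↦ by linarith [hw s hs]
  have hlam'nonneg : ∀ s ≥ t₀, 0 ≤ lam' s := fun s hs ↦ by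
    rw [← (hlam' s hs).derivWithin (uniqueDiffOn_Ici t₀ s hs)]
    exact hlammono.derivWithin_nonneg
  have hztop : Φ z ≠ ⊤ := hΦproper.elim fun y hy ↦ ne_top_of_le_ne_top hy (hz y)
  refine le_energy_div_of_antitoneOn (φ := fun s ↦ moreau Φ (lam s) (x s) - (Φ z).toReal) ?_ ht
    (mul_pos (pow_pos (ht₀.trans_le ht) 2) (hwpos t ht))
  refine antitoneOn_energy_anchor ht₀.le hα hβnonneg (fun s hs ↦ (hwpos s hs).le) hw' hgrowth
    (fun s hs ↦ hasDerivWithinAt_anchor z (ht₀.trans_le hs).ne' (hβ' s hs) (hx s hs) (hv s hs)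
      (hG' s hs) (hode s hs))
    (fun s hs ↦ sub_nonneg.2 ((hp s hs).toReal_le_moreau (hlampos s hs) hΦbot hΦproper hz))
    (fun s hs ↦ (hp s hs).moreau_sub_toReal_le_inner (hlampos s hs) hΦconv hΦbot hztop)
    (fun s hs ↦ (hasDerivWithinAt_moreau hs hΦbot hΦproper hΦconv hlampos hp (hlam' s hs)
      (hx s hs) (hG' s hs).continuousWithinAt).sub_const _)
    (fun s hs ↦ sub_le_self _ (mul_nonneg (by positivity) (hlam'nonneg s hs)))

theorem moreau_value_rate
    {H : Type*} [NormedAddCommGroup H] [InnerProductSpace ℝ H] [CompleteSpace H]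
    (Φ : H → EReal)
    (hΦbot : ∀ y, Φ y ≠ ⊥) (hΦproper : ∃ y, Φ y ≠ ⊤)
    (hΦconv : EConvexOn Φ) (hΦlsc : LowerSemicontinuous Φ)
    (t₀ α : ℝ) (ht₀ : 0 < t₀)
    (β b lam β' b' lam' w' : ℝ → ℝ)
    (hβnonneg : ∀ t ≥ t₀, 0 ≤ β t)
    (hbpos : ∀ t ≥ t₀, 0 < b t)
    (hlampos : ∀ t ≥ t₀, 0 < lam t)
    (hβ' : ∀ t ≥ t₀, HasDerivAt β (β' t) t)
    (hb' : ∀ t ≥ t₀, HasDerivAt b (b' t) t)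
    (hlam' : ∀ t ≥ t₀, HasDerivAt lam (lam' t) t)
    (hw' : ∀ t ≥ t₀, HasDerivAt (fun s => b s - β' s - β s / s) (w' t) t)
    (x v acc p G' : ℝ → H)
    (hx : ∀ t ≥ t₀, HasDerivAt x (v t) t)
    (hv : ∀ t ≥ t₀, HasDerivAt v (acc t) t)
    (hp : ∀ t ≥ t₀, IsProxPt Φ (lam t) (x t) (p t))
    (hG' : ∀ t ≥ t₀, HasDerivAt (fun s => (lam s)⁻¹ • (x s - p s)) (G' t) t)
    (hode : ∀ t ≥ t₀, acc t + (α / t) • v t + β t • G' t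
        + b t • ((lam t)⁻¹ • (x t - p t)) = 0)
    (hα : 1 ≤ α)
    (hlammono : MonotoneOn lam (Set.Ici t₀))
    (hw : ∀ t ≥ t₀, β' t + β t / t < b t)
    (hAs1 : ∀ t ≥ t₀, 0 ≤ (α - 3) * (b t - β' t - β t / t) - t * w' t)
    (z : H) (hz : ∀ y, Φ z ≤ Φ y)
    :
    ∀ t ≥ t₀, moreau Φ (lam t) (x t) - (Φ z).toReal ≤
      (t₀ ^ 2 * (b t₀ - β' t₀ - β t₀ / t₀) * (moreau Φ (lam t₀) (x t₀) - (Φ z).toReal)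
        + (1 / 2) * ‖(α - 1) • (x t₀ - z) + t₀ • v t₀
            + (t₀ * β t₀) • ((lam t₀)⁻¹ • (x t₀ - p t₀))‖ ^ 2)
        / (t ^ 2 * (b t - β' t - β t / t)) := by
  exact fun t ht ↦ moreau_value_rate_general hΦbot hΦproper hΦconv ht₀ hβnonneg hlampos
    (fun s hs ↦ (hβ' s hs).hasDerivWithinAt) (fun s hs ↦ (hlam' s hs).hasDerivWithinAt)
    (fun s hs ↦ (hw' s hs).hasDerivWithinAt) (fun s hs ↦ (hx s hs).hasDerivWithinAt)
    (fun s hs ↦ (hv s hs).hasDerivWithinAt) hp (fun s hs ↦ (hG' s hs).hasDerivWithinAt)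
    hode hα hlammono hw hAs1 hz ht
end
end

section
/- Assume α > 1, λ is nondecreasing on [t₀,∞), b(t) > β'(t) + β(t)/t (equivalently w(t) > 0) for every t ≥ t₀, and there exists ε ∈ (0, α−1) such that (α−3)·w(t) − t·w'(t) ≥ ε·b(t) for every t ≥ t₀. Then ∫_{t₀}^{∞} t·b(t)·(Φ_{λ(t)}(x(t)) − Φ*) dt < +∞. -/
open Set MeasureTheory Filter Real

noncomputable section

/-!
Write `G = λ⁻¹ (x - p)` for the gradient of the envelope along the trajectory,
`φ(t) = Φ_{λ(t)}(x(t))` and `Δ = φ - Φ*`. Since `p` is a minimizer, the envelope theorem gives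
`φ' = ⟪G, ẋ⟫ - λ' ‖G‖² / 2`, and since `G` is a subgradient of `Φ` at `p`,
`Δ + λ ‖G‖² / 2 ≤ ⟪G, x - z⟫`. The vector `η = (α - 1) (x - z) + t (ẋ + β G)` is chosen so that
the differential equation becomes `η' = -t w G`. In the derivative of the Lyapunov function
`E = t² w Δ + ‖η‖² / 2` the terms in `⟪G, ẋ⟫` then cancel, which leaves
`E' ≤ -t ((α - 3) w - t w') Δ - t w (t (2 β + λ') + (α - 1) λ) ‖G‖² / 2 ≤ -ε t b Δ`.
As `E ≥ 0`, the function `t b Δ` is integrable.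
-/

section RealAnalysis

lemma hasDerivWithinAt_of_le_of_le {S : Set ℝ} {t d : ℝ} {f g h : ℝ → ℝ}
    (hf : HasDerivWithinAt f d S t) (hh : HasDerivWithinAt h d S t)
    (hft : f t = g t) (hht : h t = g t)
    (hfg : ∀ s ∈ S, f s ≤ g s) (hgh : ∀ s ∈ S, g s ≤ h s) : HasDerivWithinAt g d S t := by
  have hdiff : HasDerivWithinAt (fun s => g s - f s) 0 S t := by
    have hhf : HasDerivWithinAt (fun s => h s - f s) 0 S t := (hh.sub hf).congr_deriv (sub_self d)
    rw [hasDerivWithinAt_iff_isLittleO] at hhf ⊢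
    refine Asymptotics.IsLittleO.of_bound fun c hc => ?_
    filter_upwards [hhf.bound hc, self_mem_nhdsWithin] with s hs hsS
    refine le_trans ?_ hs
    simp only [hft, hht, sub_self, smul_zero, sub_zero, Real.norm_eq_abs]
    exact abs_le_abs_of_nonneg (sub_nonneg.2 (hfg s hsS)) (sub_le_sub_right (hgh s hsS) _)
  refine ((hdiff.add hf).congr_deriv (zero_add d)).congr (fun s _ => ?_) ?_ <;> simp

lemma exists_tendsto_atTop_of_antitoneOn_Ici {E : ℝ → ℝ} {a : ℝ} (hE : AntitoneOn E (Ici a))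
    (hbdd : BddBelow (E '' Ici a)) : ∃ l, Tendsto E atTop (nhds l) := by
  have hanti : Antitone fun t => E (max t a) := fun s t hst =>
    hE (le_max_right s a) (le_max_right t a) (max_le_max_right a hst)
  have hrange : range (fun t => E (max t a)) ⊆ E '' Ici a := by
    rintro _ ⟨t, rfl⟩
    exact mem_image_of_mem E (le_max_right t a)
  refine ⟨_, (tendsto_atTop_ciInf hanti (hbdd.mono hrange)).congr' ?_⟩
  filter_upwards [eventually_ge_atTop a] with t ht
  rw [max_eq_left ht]

lemma integrableOn_Ici_of_hasDerivWithinAt_nonpos {E E' : ℝ → ℝ} {a : ℝ}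
    (hE : ∀ t ≥ a, HasDerivWithinAt E (E' t) (Ici a) t) (hE' : ∀ t ≥ a, E' t ≤ 0)
    (hbdd : BddBelow (E '' Ici a)) : IntegrableOn E' (Ici a) := by
  have hcont : ContinuousOn E (Ici a) := fun t ht => (hE t ht).continuousWithinAt
  have hderiv : ∀ t ∈ Ioi a, HasDerivAt E (E' t) t := fun t ht =>
    (hE t (le_of_lt ht)).hasDerivAt (Ici_mem_nhds ht)
  have hnonpos : ∀ t ∈ Ioi a, E' t ≤ 0 := fun t ht => hE' t (le_of_lt ht)
  have hanti : AntitoneOn E (Ici a) := by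
    refine antitoneOn_of_hasDerivWithinAt_nonpos (f' := E') (convex_Ici a) hcont ?_ ?_ <;>
      rw [interior_Ici]
    exacts [fun t ht => (hderiv t ht).hasDerivWithinAt, hnonpos]
  obtain ⟨l, hl⟩ := exists_tendsto_atTop_of_antitoneOn_Ici hanti hbdd
  rw [integrableOn_Ici_iff_integrableOn_Ioi]
  exact integrableOn_Ioi_deriv_of_nonpos (hcont a self_mem_Ici) hderiv hnonpos hl

lemma lintegral_ofReal_lt_top_of_hasDerivWithinAt_le {E E' f : ℝ → ℝ} {a ε : ℝ} (hε : 0 < ε)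
    (hE : ∀ t ≥ a, HasDerivWithinAt E (E' t) (Ici a) t) (hbdd : BddBelow (E '' Ici a))
    (hf : ∀ t ≥ a, 0 ≤ f t) (hle : ∀ t ≥ a, E' t ≤ -(ε * f t)) :
    ∫⁻ t in Ici a, ENNReal.ofReal (f t) < ⊤ := by
  have hE' : ∀ t ≥ a, E' t ≤ 0 := fun t ht =>
    (hle t ht).trans (neg_nonpos.2 (mul_nonneg hε.le (hf t ht)))
  have hint : IntegrableOn (fun t => ε⁻¹ * -E' t) (Ici a) :=
    (integrableOn_Ici_of_hasDerivWithinAt_nonpos hE hE' hbdd).neg.const_mul ε⁻¹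
  refine (setLIntegral_mono' measurableSet_Ici fun t ht => ?_).trans_lt hint.lintegral_lt_top
  refine ENNReal.ofReal_le_ofReal ((le_inv_mul_iff₀ hε).2 ?_)
  exact le_neg_of_le_neg (hle t ht)

end RealAnalysis

section NormedSpace

variable {E : Type*} [NormedAddCommGroup E] [NormedSpace ℝ E]

lemma norm_smul_sq_real (c : ℝ) (u : E) : ‖c • u‖ ^ 2 = c ^ 2 * ‖u‖ ^ 2 := by
  rw [norm_smul, mul_pow, Real.norm_eq_abs, sq_abs]

lemma EConvexOn.le_coe_toReal {f : E → EReal} {p q : E} (hf : EConvexOn f) (hbot : ∀ y, f y ≠ ⊥)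
    (hp : f p ≠ ⊤) (hq : f q ≠ ⊤) {a c : ℝ} (ha : 0 ≤ a) (hc : 0 ≤ c)
    (hac : a + c = 1) :
    f (a • p + c • q) ≤ ((a * (f p).toReal + c * (f q).toReal : ℝ) : EReal) := by
  rw [EReal.coe_add, EReal.coe_mul, EReal.coe_mul, EReal.coe_toReal hp (hbot p),
    EReal.coe_toReal hq (hbot q)]
  exact hf p q a c ha hc hac

end NormedSpace

section MoreauFlow

variable {H : Type*} [NormedAddCommGroup H] [InnerProductSpace ℝ H]

section ProximalPoint

variable {f : H → EReal} {l : ℝ} {x p q z : H}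

lemma toReal_le_moreau (hl : 0 ≤ l) (hbot : f z ≠ ⊥) (htop : f z ≠ ⊤) (hz : ∀ y, f z ≤ f y) :
    (f z).toReal ≤ moreau f l x := by
  refine EReal.toReal_le_toReal (le_iInf fun y => ?_) hbot ?_
  · exact le_add_of_le_of_nonneg (hz y) (EReal.coe_nonneg.2 (by positivity))
  · exact ne_top_of_le_ne_top (EReal.add_ne_top htop (EReal.coe_ne_top _)) (iInf_le _ z)

lemma IsProxPt.ne_top_s7 (hp : IsProxPt f l x p) (hq : f q ≠ ⊤) : f p ≠ ⊤ := by
  intro htop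
  have hle := hp q
  rw [htop, EReal.top_add_coe, top_le_iff] at hle
  exact EReal.add_ne_top hq (EReal.coe_ne_top _) hle

lemma IsProxPt.moreau_eq_s7 (hp : IsProxPt f l x p) (hbot : f p ≠ ⊥) (htop : f p ≠ ⊤) :
    moreau f l x = (f p).toReal + ‖x - p‖ ^ 2 / (2 * l) := by
  have hinf : (⨅ y, f y + ((‖x - y‖ ^ 2 / (2 * l) : ℝ) : EReal))
      = f p + ((‖x - p‖ ^ 2 / (2 * l) : ℝ) : EReal) :=
    le_antisymm (iInf_le _ p) (le_iInf hp)
  rw [moreau, hinf, EReal.toReal_add htop hbot (EReal.coe_ne_top _) (EReal.coe_ne_bot _),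
    EReal.toReal_coe]

lemma IsProxPt.moreau_le (hp : IsProxPt f l x p) (hbot : f p ≠ ⊥) {r : ℝ} (hq : f q ≤ r) :
    moreau f l x ≤ r + ‖x - q‖ ^ 2 / (2 * l) := by
  have htop : f p ≠ ⊤ := hp.ne_top_s7 (ne_top_of_le_ne_top (EReal.coe_ne_top r) hq)
  rw [hp.moreau_eq_s7 hbot htop, ← EReal.coe_le_coe_iff, EReal.coe_add, EReal.coe_add,
    EReal.coe_toReal htop hbot]
  exact (hp q).trans (add_le_add_left hq _)

-- Minimality of `p` is tested at `(1 - s) p + s q`; dividing by `s` and letting `s → 0` removes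
-- the quadratic term.
lemma IsProxPt.toReal_add_inner_le_s7 (hp : IsProxPt f l x p) (hf : EConvexOn f)
    (hbot : ∀ y, f y ≠ ⊥) (hq : f q ≠ ⊤) :
    (f p).toReal + inner ℝ (l⁻¹ • (x - p)) (q - p) ≤ (f q).toReal := by
  have hpt : f p ≠ ⊤ := hp.ne_top_s7 hq
  have hsegment : ∀ s ∈ Ioc (0 : ℝ) 1, (f p).toReal + inner ℝ (l⁻¹ • (x - p)) (q - p)
      ≤ (f q).toReal + s * (l⁻¹ * ‖q - p‖ ^ 2 / 2) := by
    rintro s ⟨hs, hs1⟩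
    have hmin := hp.moreau_le (hbot p)
      (hf.le_coe_toReal hbot hpt hq (sub_nonneg.2 hs1) hs.le (sub_add_cancel 1 s))
    have hsub : x - ((1 - s) • p + s • q) = (x - p) - s • (q - p) := by module
    rw [hp.moreau_eq_s7 (hbot p) hpt, hsub, norm_sub_sq_real (x - p),
      real_inner_smul_right, norm_smul_sq_real] at hmin
    rw [real_inner_smul_left]
    refine le_of_mul_le_mul_left ?_ hs
    linear_combination hmin
  have hlim : Tendsto (fun s : ℝ => (f q).toReal + s * (l⁻¹ * ‖q - p‖ ^ 2 / 2))
      (nhdsWithin 0 (Ioi 0)) (nhds (f q).toReal) := by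
    exact Tendsto.mono_left (Continuous.tendsto' (by fun_prop) _ _ (by simp)) nhdsWithin_le_nhds
  exact ge_of_tendsto hlim (mem_of_superset (Ioc_mem_nhdsGT zero_lt_one) hsegment)

lemma IsProxPt.moreau_sub_add_le_inner (hp : IsProxPt f l x p) (hl : l ≠ 0) (hf : EConvexOn f)
    (hbot : ∀ y, f y ≠ ⊥) (hq : f q ≠ ⊤) :
    moreau f l x - (f q).toReal + l / 2 * ‖l⁻¹ • (x - p)‖ ^ 2
      ≤ inner ℝ (l⁻¹ • (x - p)) (x - q) := by
  have hsubgrad := hp.toReal_add_inner_le_s7 hf hbot hq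
  have hsplit : inner ℝ (l⁻¹ • (x - p)) (x - q)
      = l⁻¹ * ‖x - p‖ ^ 2 - inner ℝ (l⁻¹ • (x - p)) (q - p) := by
    rw [← sub_sub_sub_cancel_right x q p, inner_sub_right, real_inner_smul_left,
      real_inner_self_eq_norm_sq]
  have hnorm : l / 2 * ‖l⁻¹ • (x - p)‖ ^ 2 = l⁻¹ * ‖x - p‖ ^ 2 / 2 := by
    rw [norm_smul_sq_real]
    field_simp
  rw [hp.moreau_eq_s7 (hbot p) (hp.ne_top_s7 hq), hnorm, hsplit]
  linear_combination hsubgrad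

end ProximalPoint

section EnvelopeDerivative

variable {S : Set ℝ} {t l' : ℝ} {lam : ℝ → ℝ} {x p : ℝ → H} {v p' : H}

lemma hasDerivWithinAt_norm_sub_sq_div (hlam0 : lam t ≠ 0) (hlam : HasDerivWithinAt lam l' S t)
    (hx : HasDerivWithinAt x v S t) (hp : HasDerivWithinAt p p' S t) :
    HasDerivWithinAt (fun s => ‖x s - p s‖ ^ 2 / (2 * lam s))
      (inner ℝ ((lam t)⁻¹ • (x t - p t)) (v - p')
        - l' / 2 * ‖(lam t)⁻¹ • (x t - p t)‖ ^ 2) S t := by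
  refine ((hx.sub hp).norm_sq.div (hlam.const_mul 2) (by simpa using hlam0)).congr_deriv ?_
  rw [norm_smul_sq_real, real_inner_smul_left]
  simp only [Pi.sub_apply]
  field_simp

-- The envelope is squeezed between two functions with this derivative: `p t` is a competitor at
-- time `s`, and `p s` is a competitor at time `t`.
lemma hasDerivWithinAt_moreau_s7 {f : H → EReal} {q : H} (ht : t ∈ S) (hlam0 : lam t ≠ 0)
    (hbot : ∀ y, f y ≠ ⊥) (hq : f q ≠ ⊤)
    (hprox : ∀ s ∈ S, IsProxPt f (lam s) (x s) (p s)) (hlam : HasDerivWithinAt lam l' S t)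
    (hx : HasDerivWithinAt x v S t) (hp : HasDerivWithinAt p p' S t) :
    HasDerivWithinAt (fun s => moreau f (lam s) (x s))
      (inner ℝ ((lam t)⁻¹ • (x t - p t)) v - l' / 2 * ‖(lam t)⁻¹ • (x t - p t)‖ ^ 2) S t := by
  have hfin : ∀ s ∈ S, f (p s) ≠ ⊤ := fun s hs => (hprox s hs).ne_top_s7 hq
  have heq : ∀ s ∈ S, moreau f (lam s) (x s)
      = (f (p s)).toReal + ‖x s - p s‖ ^ 2 / (2 * lam s) := fun s hs =>
    (hprox s hs).moreau_eq_s7 (hbot _) (hfin s hs)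
  have hle : ∀ s ∈ S, ∀ r ∈ S, moreau f (lam s) (x s)
      ≤ (f (p r)).toReal + ‖x s - p r‖ ^ 2 / (2 * lam s) := fun s hs r hr =>
    (hprox s hs).moreau_le (hbot _) (EReal.le_coe_toReal (hfin r hr))
  have hupper := (hasDerivWithinAt_norm_sub_sq_div hlam0 hlam hx
    (hasDerivWithinAt_const t S (p t))).const_add (f (p t)).toReal
  have hlower := ((hasDerivWithinAt_norm_sub_sq_div hlam0 hlam hx hp).sub
    (hasDerivWithinAt_norm_sub_sq_div (lam := fun _ => lam t) hlam0
      (hasDerivWithinAt_const t S (lam t)) (hasDerivWithinAt_const t S (x t)) hp)).const_add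
        (moreau f (lam t) (x t))
  refine hasDerivWithinAt_of_le_of_le (hlower.congr_deriv ?_) (hupper.congr_deriv ?_) ?_
    (heq t ht).symm ?_ fun s hs => hle s hs t ht
  · simp only [inner_sub_right, inner_zero_right]
    ring
  · rw [sub_zero]
  · simp
  · intro s hs
    simp only [Pi.sub_apply]
    linear_combination hle t ht s hs - heq s hs

lemma hasDerivWithinAt_of_inv_smul_sub {G' : H} (ht : t ∈ S) (hlam0 : ∀ s ∈ S, lam s ≠ 0)
    (hlam : HasDerivWithinAt lam l' S t) (hx : HasDerivWithinAt x v S t)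
    (hG : HasDerivWithinAt (fun s => (lam s)⁻¹ • (x s - p s)) G' S t) :
    HasDerivWithinAt p (v - (lam t • G' + l' • (lam t)⁻¹ • (x t - p t))) S t := by
  have hp : ∀ s ∈ S, p s = x s - lam s • (lam s)⁻¹ • (x s - p s) := fun s hs => by
    rw [smul_inv_smul₀ (hlam0 s hs), sub_sub_cancel]
  exact (hx.sub (hlam.smul hG)).congr hp (hp t ht)

end EnvelopeDerivative

section Lyapunov

/-- The vector `(α - 1) (x - z) + t (ẋ + β G)` of the Lyapunov analysis; `v` stands for `ẋ` and
`G` for the gradient of the Moreau envelope along the trajectory. -/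
def lyapunovVector (α : ℝ) (z : H) (β : ℝ → ℝ) (x v G : ℝ → H) (t : ℝ) : H :=
  (α - 1) • (x t - z) + t • (v t + β t • G t)

/-- The Lyapunov function `t² w (φ - m) + ‖(α - 1) (x - z) + t (ẋ + β G)‖² / 2`, where `φ` stands
for the values of the Moreau envelope along the trajectory and `m` for the optimal value. -/
def lyapunov (α m : ℝ) (z : H) (w φ β : ℝ → ℝ) (x v G : ℝ → H) (t : ℝ) : ℝ :=
  t ^ 2 * w t * (φ t - m) + ‖lyapunovVector α z β x v G t‖ ^ 2 / 2

variable {S : Set ℝ} {t α m : ℝ} {z : H} {w φ β : ℝ → ℝ} {x v G : ℝ → H}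

lemma lyapunov_nonneg (hw : 0 ≤ w t) (hφ : 0 ≤ φ t - m) : 0 ≤ lyapunov α m z w φ β x v G t := by
  unfold lyapunov
  positivity

lemma hasDerivWithinAt_lyapunovVector {b β' : ℝ} {acc G' : H} (ht : t ≠ 0)
    (hβ : HasDerivWithinAt β β' S t) (hx : HasDerivWithinAt x (v t) S t)
    (hv : HasDerivWithinAt v acc S t) (hG : HasDerivWithinAt G G' S t)
    (hode : acc + (α / t) • v t + β t • G' + b • G t = 0) :
    HasDerivWithinAt (lyapunovVector α z β x v G) (-(t * (b - β' - β t / t)) • G t) S t := by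
  have hacc : acc = -((α / t) • v t + β t • G' + b • G t) := by
    rw [eq_neg_iff_add_eq_zero, ← hode]
    abel
  refine (((hx.sub_const z).const_smul (α - 1)).add
    ((hasDerivWithinAt_id t S).smul (hv.add (hβ.smul hG)))).congr_deriv ?_
  simp only [id, Pi.add_apply, Pi.smul_apply', hacc]
  match_scalars <;> field_simp <;> ring

lemma hasDerivWithinAt_lyapunov {w' l' : ℝ} (hw : HasDerivWithinAt w w' S t)
    (hφ : HasDerivWithinAt φ (inner ℝ (G t) (v t) - l' / 2 * ‖G t‖ ^ 2) S t)
    (hη : HasDerivWithinAt (lyapunovVector α z β x v G) (-(t * w t) • G t) S t) :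
    HasDerivWithinAt (lyapunov α m z w φ β x v G)
      (t * ((2 * w t + t * w') * (φ t - m) - (α - 1) * w t * inner ℝ (G t) (x t - z))
        - t ^ 2 * w t * (β t + l' / 2) * ‖G t‖ ^ 2) S t := by
  have hinner : inner ℝ (lyapunovVector α z β x v G t) (-(t * w t) • G t)
      = -(t * w t) * ((α - 1) * inner ℝ (G t) (x t - z)
        + t * (inner ℝ (G t) (v t) + β t * ‖G t‖ ^ 2)) := by
    rw [real_inner_smul_right, real_inner_comm]
    simp only [lyapunovVector, inner_add_right, real_inner_smul_right, real_inner_self_eq_norm_sq]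
  refine (((((hasDerivWithinAt_id t S).pow 2).mul hw).mul (hφ.sub_const m)).add
    (hη.norm_sq.div_const 2)).congr_deriv ?_
  rw [hinner]
  simp only [Nat.cast_ofNat, id_eq, Nat.add_one_sub_one, pow_one, mul_one, Pi.pow_apply,
    Pi.mul_apply]
  ring

lemma lyapunov_deriv_le {b w w' α β l l' ε t gap normSq pairing : ℝ}
    (ht : 0 ≤ t) (hw : 0 ≤ w) (hα : 1 ≤ α) (hgap : 0 ≤ gap) (hnormSq : 0 ≤ normSq)
    (hpairing : gap + l / 2 * normSq ≤ pairing)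
    (hdamping : 0 ≤ t * (2 * β + l') + (α - 1) * l)
    (hgrowth : ε * b ≤ (α - 3) * w - t * w') :
    t * ((2 * w + t * w') * gap - (α - 1) * w * pairing) - t ^ 2 * w * (β + l' / 2) * normSq
      ≤ -(ε * (t * b * gap)) := by
  have hpairing' : 0 ≤ t * w * (α - 1) * (pairing - (gap + l / 2 * normSq)) :=
    mul_nonneg (mul_nonneg (mul_nonneg ht hw) (sub_nonneg.2 hα)) (sub_nonneg.2 hpairing)
  have hdamping' : 0 ≤ t * w * normSq / 2 * (t * (2 * β + l') + (α - 1) * l) :=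
    mul_nonneg (by positivity) hdamping
  have hgrowth' : 0 ≤ t * gap * ((α - 3) * w - t * w' - ε * b) :=
    mul_nonneg (mul_nonneg ht hgap) (sub_nonneg.2 hgrowth)
  linear_combination hpairing' + hdamping' + hgrowth'

end Lyapunov

theorem weighted_moreau_values_integral_finite_general
    {Φ : H → EReal} (hΦbot : ∀ y, Φ y ≠ ⊥) (hΦproper : ∃ y, Φ y ≠ ⊤) (hΦconv : EConvexOn Φ)
    {t₀ α ε : ℝ} (ht₀ : 0 < t₀) (hα : 1 ≤ α) (hε : 0 < ε)
    {β b lam β' lam' w' : ℝ → ℝ} {x v acc p G' : ℝ → H} {z : H}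
    (hb : ∀ t ≥ t₀, 0 ≤ b t) (hlam : ∀ t ≥ t₀, 0 < lam t)
    (hβ' : ∀ t ≥ t₀, HasDerivWithinAt β (β' t) (Ici t₀) t)
    (hlam' : ∀ t ≥ t₀, HasDerivWithinAt lam (lam' t) (Ici t₀) t)
    (hw' : ∀ t ≥ t₀, HasDerivWithinAt (fun s => b s - β' s - β s / s) (w' t) (Ici t₀) t)
    (hx : ∀ t ≥ t₀, HasDerivWithinAt x (v t) (Ici t₀) t)
    (hv : ∀ t ≥ t₀, HasDerivWithinAt v (acc t) (Ici t₀) t)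
    (hp : ∀ t ≥ t₀, IsProxPt Φ (lam t) (x t) (p t))
    (hG' : ∀ t ≥ t₀, HasDerivWithinAt (fun s => (lam s)⁻¹ • (x s - p s)) (G' t) (Ici t₀) t)
    (hode : ∀ t ≥ t₀, acc t + (α / t) • v t + β t • G' t
        + b t • ((lam t)⁻¹ • (x t - p t)) = 0)
    (hdamping : ∀ t ≥ t₀, 0 ≤ t * (2 * β t + lam' t) + (α - 1) * lam t)
    (hw : ∀ t ≥ t₀, β' t + β t / t ≤ b t)
    (hgrowth : ∀ t ≥ t₀, ε * b t ≤ (α - 3) * (b t - β' t - β t / t) - t * w' t)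
    (hz : ∀ y, Φ z ≤ Φ y) :
    ∫⁻ t in Ici t₀, ENNReal.ofReal
      (t * b t * (moreau Φ (lam t) (x t) - (Φ z).toReal)) < ⊤ := by
  obtain ⟨y, hy⟩ := hΦproper
  have hΦz : Φ z ≠ ⊤ := ne_top_of_le_ne_top hy (hz y)
  have hpos : ∀ t ≥ t₀, 0 < t := fun t ht => ht₀.trans_le ht
  have hw₀ : ∀ t ≥ t₀, 0 ≤ b t - β' t - β t / t := fun t ht => by linarith [hw t ht]
  have hgap : ∀ t ≥ t₀, 0 ≤ moreau Φ (lam t) (x t) - (Φ z).toReal := fun t ht =>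
    sub_nonneg.2 (toReal_le_moreau (hlam t ht).le (hΦbot z) hΦz hz)
  have hmoreau : ∀ t ≥ t₀, HasDerivWithinAt (fun s => moreau Φ (lam s) (x s))
      (inner ℝ ((lam t)⁻¹ • (x t - p t)) (v t)
        - lam' t / 2 * ‖(lam t)⁻¹ • (x t - p t)‖ ^ 2) (Ici t₀) t := fun t ht =>
    hasDerivWithinAt_moreau_s7 ht (hlam t ht).ne' hΦbot hΦz hp (hlam' t ht) (hx t ht)
      (hasDerivWithinAt_of_inv_smul_sub ht (fun s hs => (hlam s hs).ne') (hlam' t ht) (hx t ht)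
        (hG' t ht))
  have hlyapunov := fun t (ht : t ≥ t₀) =>
    hasDerivWithinAt_lyapunov (m := (Φ z).toReal) (hw' t ht) (hmoreau t ht)
      (hasDerivWithinAt_lyapunovVector (z := z) (hpos t ht).ne' (hβ' t ht) (hx t ht) (hv t ht)
        (hG' t ht) (hode t ht))
  refine lintegral_ofReal_lt_top_of_hasDerivWithinAt_le hε hlyapunov
    ⟨0, forall_mem_image.2 fun t ht => lyapunov_nonneg (hw₀ t ht) (hgap t ht)⟩
    (fun t ht => mul_nonneg (mul_nonneg (hpos t ht).le (hb t ht)) (hgap t ht)) fun t ht => ?_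
  exact lyapunov_deriv_le (hpos t ht).le (hw₀ t ht) hα (hgap t ht) (sq_nonneg _)
    ((hp t ht).moreau_sub_add_le_inner (hlam t ht).ne' hΦconv hΦbot hΦz)
    (hdamping t ht) (hgrowth t ht)

end MoreauFlow

theorem weighted_moreau_values_integral_finite
    {H : Type*} [NormedAddCommGroup H] [InnerProductSpace ℝ H] [CompleteSpace H]
    (Φ : H → EReal)
    (hΦbot : ∀ y, Φ y ≠ ⊥) (hΦproper : ∃ y, Φ y ≠ ⊤)
    (hΦconv : EConvexOn Φ) (hΦlsc : LowerSemicontinuous Φ)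
    (t₀ α : ℝ) (ht₀ : 0 < t₀)
    (β b lam β' b' lam' w' : ℝ → ℝ)
    (hβnonneg : ∀ t ≥ t₀, 0 ≤ β t)
    (hbpos : ∀ t ≥ t₀, 0 < b t)
    (hlampos : ∀ t ≥ t₀, 0 < lam t)
    (hβ' : ∀ t ≥ t₀, HasDerivAt β (β' t) t)
    (hb' : ∀ t ≥ t₀, HasDerivAt b (b' t) t)
    (hlam' : ∀ t ≥ t₀, HasDerivAt lam (lam' t) t)
    (hw' : ∀ t ≥ t₀, HasDerivAt (fun s => b s - β' s - β s / s) (w' t) t)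
    (x v acc p G' : ℝ → H)
    (hx : ∀ t ≥ t₀, HasDerivAt x (v t) t)
    (hv : ∀ t ≥ t₀, HasDerivAt v (acc t) t)
    (hp : ∀ t ≥ t₀, IsProxPt Φ (lam t) (x t) (p t))
    (hG' : ∀ t ≥ t₀, HasDerivAt (fun s => (lam s)⁻¹ • (x s - p s)) (G' t) t)
    (hode : ∀ t ≥ t₀, acc t + (α / t) • v t + β t • G' t
        + b t • ((lam t)⁻¹ • (x t - p t)) = 0)
    (hα : 1 < α)
    (hlammono : MonotoneOn lam (Set.Ici t₀))
    (hw : ∀ t ≥ t₀, β' t + β t / t < b t)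
    (hAs2 : ∃ ε, 0 < ε ∧ ε < α - 1 ∧
      ∀ t ≥ t₀, ε * b t ≤ (α - 3) * (b t - β' t - β t / t) - t * w' t)
    (z : H) (hz : ∀ y, Φ z ≤ Φ y)
    :
    ∫⁻ t in Set.Ici t₀, ENNReal.ofReal
      (t * b t * (moreau Φ (lam t) (x t) - (Φ z).toReal)) < ⊤ := by
  obtain ⟨ε, hε, -, hgrowth⟩ := hAs2
  have hdamping : ∀ t ≥ t₀, 0 ≤ t * (2 * β t + lam' t) + (α - 1) * lam t := fun t ht => by
    have hlam'nonneg : 0 ≤ lam' t := (hlam' t ht).hasDerivWithinAt.nonneg_of_monotoneOn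
      (uniqueDiffOn_Ici t₀ t ht).accPt hlammono
    exact add_nonneg (mul_nonneg (ht₀.le.trans ht) (by linarith [hβnonneg t ht]))
      (mul_nonneg (sub_nonneg.2 hα.le) (hlampos t ht).le)
  exact weighted_moreau_values_integral_finite_general hΦbot hΦproper hΦconv ht₀ hα.le hε
    (fun t ht => (hbpos t ht).le) hlampos (fun t ht => (hβ' t ht).hasDerivWithinAt)
    (fun t ht => (hlam' t ht).hasDerivWithinAt) (fun t ht => (hw' t ht).hasDerivWithinAt)
    (fun t ht => (hx t ht).hasDerivWithinAt) (fun t ht => (hv t ht).hasDerivWithinAt) hp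
    (fun t ht => (hG' t ht).hasDerivWithinAt) hode hdamping (fun t ht => (hw t ht).le) hgrowth hz
end
end
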